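/- Let $\mathbb F$ be a field and $X=\{x_1,\dots,x_n\}$. An algebraic branching program (ABP) is a finite layered directed graph with layers $L_0=\{s\},L_1,\dots,L_m=\{t\}$, all edges going from one layer to the next, each edge labeled by an element of $X\cup\mathbb F$. For nodes $u\ne v$ with $v$ reachable from $u$, the subprogram $[u,v]$ consists of all directed paths from $u$ to $v$. A strict-interval ABP is an ABP such that on every $s$-to-$t$ path each variable labels at most one edge, together with an associated interval $I_{u,v}\subseteq\{1,\dots,n\}$ (a set $\{a,a+1,\dots,b\}$ or the empty set) for every subprogram $[u,v]$, such that 1. $I_{u,v}$ contains the indices of all variables appearing in $[u,v]$; 2. if $[u,v]$ is a subprogram of $[u',v']$ (that is, $u$ is reachable from $u'$ and $v'$ is reachable from $v$, where $u=u'$ and $v=v'$ are allowed), then $I_{u,v}\subseteq I_{u',v'}$; 3. for consecutive subprograms $[u,v]$ and $[v,w]$, the intervals $I_{u,v}$ and $I_{v,w}$ are disjoint. For intervals write $I\preceq J$ if $x\le y$ for all $x\in I$, $y\in J$; for nonempty $I=[a,b]$, $J=[c,d]$ this says $b\le c$. A node $v\notin\{s,t\}$ on an $s$-to-$t$ path is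 ascending if $I_{s,v}\preceq I_{v,t}$, and descending if $I_{v,t}\preceq I_{s,v}$. Let $P$ be a strict-interval ABP and let $\rho$ be any directed $s$-to-$t$ path in $P$. Then either every node of $\rho$ other than $s$ and $t$ is ascending ($\rho$ is ascending), or every node of $\rho$ other than $s$ and $t$ is descending ($\rho$ is descending). Moreover, $\rho$ does not contain nodes $u,v\notin\{s,t\}$ (possibly $u=v$) such that $u$ is ascending, $v$ is descending, and the intervals $I_{s,u}, I_{u,t}, I_{s,v}, I_{v,t}$ are all nonempty; in particular, if all associated intervals are nonempty, no $s$-to-$t$ path contains both an ascending node and a descending node. -/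

import Mathlib

/-- An algebraic branching program over `F` in the variables `x_0, …, x_{n-1}` with node set `V`:
a layered directed graph with layers `0, …, m`, whose layer `0` is `{s}` and whose layer `m` is
`{t}`, and all of whose edges go from one layer to the next. `label u v = some e` means that there
is an edge from `u` to `v` labeled `e`, a constant (`Sum.inl`) or a variable (`Sum.inr`);
`label u v = none` means that there is no edge from `u` to `v`. -/
structure ABP (F : Type*) (n : ℕ) (V : Type*) where
  m : ℕ
  layer : V → ℕ
  s : V
  t : V
  layer_le : ∀ v, layer v ≤ m
  layer_eq_zero_iff : ∀ v, layer v = 0 ↔ v = s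
  layer_eq_m_iff : ∀ v, layer v = m ↔ v = t
  label : V → V → Option (F ⊕ Fin n)
  layer_succ : ∀ u v, label u v ≠ none → layer v = layer u + 1

namespace ABP

/-- Directed paths of an ABP. -/
inductive Path {F : Type*} {n : ℕ} {V : Type*} (P : ABP F n V) : V → V → Type _
  | nil (u : V) : Path P u u
  | cons {u v w : V} (e : F ⊕ Fin n) (h : P.label u v = some e) (ρ : Path P v w) : Path P u w

namespace Path

/-- The nodes of a path, in order, both endpoints included. -/
def nodes {F : Type*} {n : ℕ} {V : Type*} {P : ABP F n V} : {u v : V} → P.Path u v → List V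
  | _, _, .nil u => [u]
  | u, _, .cons _ _ ρ => u :: ρ.nodes

/-- The variables labeling the edges of a path, in order and with repetitions. -/
def vars {F : Type*} {n : ℕ} {V : Type*} {P : ABP F n V} : {u v : V} → P.Path u v → List (Fin n)
  | _, _, .nil _ => []
  | _, _, .cons (.inl _) _ ρ => ρ.vars
  | _, _, .cons (.inr x) _ ρ => x :: ρ.vars

end Path

/-- There is a directed path from `u` to `v`. -/
def Reaches {F : Type*} {n : ℕ} {V : Type*} (P : ABP F n V) (u v : V) : Prop :=
  Nonempty (P.Path u v)

/-- Syntactic multilinearity: every variable labels at most one edge of each `s`-to-`t` path. -/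
def SynMultilinear {F : Type*} {n : ℕ} {V : Type*} (P : ABP F n V) : Prop :=
  ∀ ρ : P.Path P.s P.t, ρ.vars.Nodup

/-- The set of (indices of) variables that appear in the subprogram `[u,v]`, that is, on some
path from `u` to `v`. -/
def subVars {F : Type*} {n : ℕ} {V : Type*} (P : ABP F n V) (u v : V) : Set (Fin n) :=
  {x | ∃ ρ : P.Path u v, x ∈ ρ.vars}

end ABP

/-- `S` is an interval `[a,b] = {a, …, b}` of indices, or empty. -/
def IsIndexInterval {n : ℕ} (S : Set (Fin n)) : Prop :=
  S = ∅ ∨ ∃ a b : Fin n, a ≤ b ∧ S = Set.Icc a b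

/-- The relation `I ⪯ J`. For nonempty intervals `I = [a,b]` and `J = [c,d]` it says `b ≤ c`
(see `precedes_Icc_iff`); it holds if `I` or `J` is empty. -/
def Precedes {n : ℕ} (I J : Set (Fin n)) : Prop :=
  ∀ x ∈ I, ∀ y ∈ J, x ≤ y

theorem precedes_Icc_iff {n : ℕ} {a b c d : Fin n} (hab : a ≤ b) (hcd : c ≤ d) :
    Precedes (Set.Icc a b) (Set.Icc c d) ↔ b ≤ c :=
  ⟨fun h => h b ⟨hab, le_rfl⟩ c ⟨le_rfl, hcd⟩, fun h _ hx _ hy => hx.2.trans (h.trans hy.1)⟩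

/-- A strict-interval ABP: a syntactically multilinear ABP in which every subprogram `[u,v]`
(`u ≠ v`, with `v` reachable from `u`) has an associated interval `I u v` such that
* `I u v` contains the indices of all variables appearing in `[u,v]`;
* the interval of a subprogram `[u,v]` of `[u',v']` is contained in the interval of `[u',v']`;
* the intervals of consecutive subprograms `[u,v]` and `[v,w]` are disjoint.
The interval may be empty, which by the first condition is possible only for a subprogram
without variables. -/
structure StrictIntervalABP (F : Type*) (n : ℕ) (V : Type*) extends ABP F n V where
  synMultilinear : toABP.SynMultilinear
  I : V → V → Set (Fin n)
  isIndexInterval : ∀ u v, u ≠ v → toABP.Reaches u v → IsIndexInterval (I u v)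
  subVars_subset : ∀ u v, u ≠ v → toABP.Reaches u v → toABP.subVars u v ⊆ I u v
  I_mono : ∀ u' u v v', u ≠ v → toABP.Reaches u' u → toABP.Reaches u v → toABP.Reaches v v' →
    I u v ⊆ I u' v'
  disjoint : ∀ u v w, u ≠ v → v ≠ w → toABP.Reaches u v → toABP.Reaches v w →
    Disjoint (I u v) (I v w)

namespace StrictIntervalABP

/-- The node `v` is ascending: `I_{s,v} ⪯ I_{v,t}`. -/
def Ascending {F : Type*} {n : ℕ} {V : Type*} (P : StrictIntervalABP F n V) (v : V) : Prop :=
  Precedes (P.I P.s v) (P.I v P.t)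

/-- The node `v` is descending: `I_{v,t} ⪯ I_{s,v}`. -/
def Descending {F : Type*} {n : ℕ} {V : Type*} (P : StrictIntervalABP F n V) (v : V) : Prop :=
  Precedes (P.I v P.t) (P.I P.s v)

/-- Both intervals that enter into the definition of an ascending or descending node `v`,
`I_{s,v}` and `I_{v,t}`, are nonempty. -/
def Nondegenerate {F : Type*} {n : ℕ} {V : Type*} (P : StrictIntervalABP F n V) (v : V) : Prop :=
  (P.I P.s v).Nonempty ∧ (P.I v P.t).Nonempty

end StrictIntervalABP

/-!
For an inner node `v` of a path, `I_{s,v}` and `I_{v,t}` are disjoint intervals, hence comparable,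
so `v` is ascending or descending. If `u` comes before `v` on the path, then `I_{s,u} ⊆ I_{s,v}` and
`I_{v,t} ⊆ I_{u,t}`. Hence the direction of `u` and the direction of `v` both order the same two
disjoint sets `I_{s,u}` and `I_{v,t}`; if these are nonempty, only one order is possible. A node
that fails to be ascending or to be descending has nonempty intervals, so nodes with an empty
interval never obstruct a common direction.
-/

theorem forall_le_or_forall_le_of_ordConnected_of_disjoint {α : Type*} [LinearOrder α]
    {S T : Set α} (hS : S.OrdConnected) (hT : T.OrdConnected) (hST : Disjoint S T) :
    (∀ x ∈ S, ∀ y ∈ T, x ≤ y) ∨ (∀ y ∈ T, ∀ x ∈ S, y ≤ x) := by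
  by_contra! h
  obtain ⟨⟨x, hx, y, hy, hyx⟩, y', hy', x', hx', hxy'⟩ := h
  rcases le_total x' y with hle | hle
  · exact Set.disjoint_left.mp hST (hS.out hx' hx ⟨hle, hyx.le⟩) hy
  · exact Set.disjoint_left.mp hST hx' (hT.out hy hy' ⟨hle, hxy'.le⟩)

section Precedes

variable {n : ℕ} {S S' T T' : Set (Fin n)}

theorem IsIndexInterval.ordConnected (hS : IsIndexInterval S) : S.OrdConnected := by
  rcases hS with rfl | ⟨a, b, -, rfl⟩
  · exact Set.ordConnected_empty
  · exact Set.ordConnected_Icc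

theorem IsIndexInterval.precedes_or_precedes (hS : IsIndexInterval S) (hT : IsIndexInterval T)
    (hST : Disjoint S T) : Precedes S T ∨ Precedes T S :=
  forall_le_or_forall_le_of_ordConnected_of_disjoint hS.ordConnected hT.ordConnected hST

theorem Precedes.mono (h : Precedes S T) (hS : S' ⊆ S) (hT : T' ⊆ T) : Precedes S' T' :=
  fun x hx y hy => h x (hS hx) y (hT hy)

theorem Precedes.not_precedes (h : Precedes S T) (hST : Disjoint S T) (hS : S.Nonempty)
    (hT : T.Nonempty) : ¬ Precedes T S := by
  obtain ⟨x, hx⟩ := hS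
  obtain ⟨y, hy⟩ := hT
  exact fun h' => hST.ne_of_mem hx hy (le_antisymm (h x hx y hy) (h' y hy x hx))

theorem nonempty_and_nonempty_of_not_precedes (h : ¬ Precedes S T) :
    S.Nonempty ∧ T.Nonempty := by
  unfold Precedes at h
  push Not at h
  obtain ⟨x, hx, y, hy, -⟩ := h
  exact ⟨⟨x, hx⟩, ⟨y, hy⟩⟩

end Precedes

namespace ABP

variable {F : Type*} {n : ℕ} {V : Type*} {P : ABP F n V} {u v w x y : V}

theorem Reaches.refl (u : V) : P.Reaches u u :=
  ⟨.nil u⟩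

namespace Path

theorem source_reaches_of_mem_nodes (ρ : P.Path u v) (hw : w ∈ ρ.nodes) : P.Reaches u w := by
  induction ρ with
  | nil u =>
    obtain rfl := List.mem_singleton.mp hw
    exact .refl w
  | cons e h ρ ih =>
    rcases List.mem_cons.mp hw with rfl | hw
    · exact .refl w
    · exact (ih hw).map (.cons e h)

theorem reaches_target_of_mem_nodes (ρ : P.Path u v) (hw : w ∈ ρ.nodes) : P.Reaches w v := by
  induction ρ with
  | nil u =>
    obtain rfl := List.mem_singleton.mp hw
    exact .refl w
  | cons e h ρ ih =>
    rcases List.mem_cons.mp hw with rfl | hw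
    · exact ⟨.cons e h ρ⟩
    · exact ih hw

theorem pairwise_reaches_nodes (ρ : P.Path u v) : ρ.nodes.Pairwise P.Reaches := by
  induction ρ with
  | nil u => exact List.pairwise_singleton _ u
  | cons e h ρ ih =>
    exact .cons (fun w hw => (ρ.source_reaches_of_mem_nodes hw).map (.cons e h)) ih

theorem reaches_or_reaches_of_mem_nodes (ρ : P.Path u v) (hx : x ∈ ρ.nodes) (hy : y ∈ ρ.nodes) :
    P.Reaches x y ∨ P.Reaches y x := by
  let Comparable (a b : V) : Prop := P.Reaches a b ∨ P.Reaches b a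
  have : Std.Symm Comparable := ⟨fun _ _ => Or.symm⟩
  have hpairwise : ρ.nodes.Pairwise Comparable := ρ.pairwise_reaches_nodes.imp Or.inl
  exact hpairwise.forall_of_forall (fun a _ => .inl (.refl a)) hx hy

end Path

end ABP

namespace StrictIntervalABP

variable {F : Type*} {n : ℕ} {V : Type*} {P : StrictIntervalABP F n V} {u v : V}

/-- An inner node of `P`: a node other than `s` and `t` that lies on an `s`-to-`t` path, expressed
by reachability from `s` and of `t`. These are the nodes `v` for which both `[s,v]` and `[v,t]` are
subprograms. -/
structure IsInner (P : StrictIntervalABP F n V) (v : V) : Prop where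
  ne_source : v ≠ P.s
  ne_target : v ≠ P.t
  source_reaches : P.toABP.Reaches P.s v
  reaches_target : P.toABP.Reaches v P.t

theorem IsInner.of_mem_nodes (ρ : P.toABP.Path P.s P.t) (hv : v ∈ ρ.nodes) (hvs : v ≠ P.s)
    (hvt : v ≠ P.t) : P.IsInner v :=
  ⟨hvs, hvt, ρ.source_reaches_of_mem_nodes hv, ρ.reaches_target_of_mem_nodes hv⟩

theorem Nondegenerate.of_not_ascending (h : ¬ P.Ascending v) : P.Nondegenerate v :=
  nonempty_and_nonempty_of_not_precedes h

theorem Nondegenerate.of_not_descending (h : ¬ P.Descending v) : P.Nondegenerate v :=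
  (nonempty_and_nonempty_of_not_precedes h).symm

namespace IsInner

theorem disjoint_I_source_I_target (hv : P.IsInner v) : Disjoint (P.I P.s v) (P.I v P.t) :=
  P.disjoint _ _ _ hv.ne_source.symm hv.ne_target hv.source_reaches hv.reaches_target

theorem ascending_or_descending (hv : P.IsInner v) : P.Ascending v ∨ P.Descending v :=
  (P.isIndexInterval _ _ hv.ne_source.symm hv.source_reaches).precedes_or_precedes
    (P.isIndexInterval _ _ hv.ne_target hv.reaches_target) hv.disjoint_I_source_I_target

theorem I_source_mono (hu : P.IsInner u) (huv : P.toABP.Reaches u v) :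
    P.I P.s u ⊆ P.I P.s v :=
  P.I_mono _ _ _ _ hu.ne_source.symm (.refl _) hu.source_reaches huv

theorem I_target_anti (hv : P.IsInner v) (huv : P.toABP.Reaches u v) :
    P.I v P.t ⊆ P.I u P.t :=
  P.I_mono _ _ _ _ hv.ne_target huv hv.reaches_target (.refl _)

theorem disjoint_I_source_I_target_of_reaches (hu : P.IsInner u) (hv : P.IsInner v)
    (huv : P.toABP.Reaches u v) : Disjoint (P.I P.s u) (P.I v P.t) :=
  hu.disjoint_I_source_I_target.mono_right (hv.I_target_anti huv)

theorem not_descending_of_ascending (hu : P.IsInner u) (hv : P.IsInner v)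
    (huv : P.toABP.Reaches u v ∨ P.toABP.Reaches v u) (hund : P.Nondegenerate u)
    (hvnd : P.Nondegenerate v) (hasc : P.Ascending u) : ¬ P.Descending v := by
  intro hdesc
  rcases huv with huv | hvu
  · have hle : Precedes (P.I P.s u) (P.I v P.t) := hasc.mono le_rfl (hv.I_target_anti huv)
    have hge : Precedes (P.I v P.t) (P.I P.s u) := hdesc.mono le_rfl (hu.I_source_mono huv)
    exact hle.not_precedes (hu.disjoint_I_source_I_target_of_reaches hv huv) hund.1 hvnd.2 hge
  · have hle : Precedes (P.I P.s v) (P.I u P.t) := hasc.mono (hv.I_source_mono hvu) le_rfl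
    have hge : Precedes (P.I u P.t) (P.I P.s v) := hdesc.mono (hu.I_target_anti hvu) le_rfl
    exact hle.not_precedes (hv.disjoint_I_source_I_target_of_reaches hu hvu) hvnd.1 hund.2 hge

end IsInner

end StrictIntervalABP

theorem path_ascending_or_descending_general {F : Type*} {n : ℕ} {V : Type*}
    (P : StrictIntervalABP F n V) (ρ : P.toABP.Path P.s P.t) :
    ((∀ v ∈ ρ.nodes, v ≠ P.s → v ≠ P.t → P.Ascending v) ∨
      (∀ v ∈ ρ.nodes, v ≠ P.s → v ≠ P.t → P.Descending v)) ∧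
    ¬ ∃ u ∈ ρ.nodes, ∃ v ∈ ρ.nodes, u ≠ P.s ∧ u ≠ P.t ∧ v ≠ P.s ∧ v ≠ P.t ∧
      P.Nondegenerate u ∧ P.Nondegenerate v ∧ P.Ascending u ∧ P.Descending v := by
  constructor
  · by_contra! h
    obtain ⟨⟨v, hv, hvs, hvt, hnasc⟩, u, hu, hus, hut, hndesc⟩ := h
    have hui : P.IsInner u := .of_mem_nodes ρ hu hus hut
    have hvi : P.IsInner v := .of_mem_nodes ρ hv hvs hvt
    have hasc : P.Ascending u := hui.ascending_or_descending.resolve_right hndesc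
    have hdesc : P.Descending v := hvi.ascending_or_descending.resolve_left hnasc
    exact hui.not_descending_of_ascending hvi (ρ.reaches_or_reaches_of_mem_nodes hu hv)
      (.of_not_descending hndesc) (.of_not_ascending hnasc) hasc hdesc
  · rintro ⟨u, hu, v, hv, hus, hut, hvs, hvt, hund, hvnd, hasc, hdesc⟩
    exact StrictIntervalABP.IsInner.not_descending_of_ascending (.of_mem_nodes ρ hu hus hut)
      (.of_mem_nodes ρ hv hvs hvt) (ρ.reaches_or_reaches_of_mem_nodes hu hv) hund hvnd hasc hdesc

theorem path_ascending_or_descending {F : Type*} [Field F] {n : ℕ} {V : Type*} [Finite V]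
    (P : StrictIntervalABP F n V) (ρ : P.toABP.Path P.s P.t) :
    ((∀ v ∈ ρ.nodes, v ≠ P.s → v ≠ P.t → P.Ascending v) ∨
      (∀ v ∈ ρ.nodes, v ≠ P.s → v ≠ P.t → P.Descending v)) ∧
    ¬ ∃ u ∈ ρ.nodes, ∃ v ∈ ρ.nodes, u ≠ P.s ∧ u ≠ P.t ∧ v ≠ P.s ∧ v ≠ P.t ∧
      P.Nondegenerate u ∧ P.Nondegenerate v ∧ P.Ascending u ∧ P.Descending v :=
  path_ascending_or_descending_general P ρ
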